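/- arXiv:2507.17967 — 8 statements merged into one kernel-verified Lean document; each statement's English description precedes it below -/
import Mathlib

section
/- Let n ≥ 1 be an integer and let x, y, z be integers such that either x³ − 7x²y + 7xy² + 7y³ = k·zⁿ for some k ∈ {1, 8}, or x³ − 4x²y + 3xy² + y³ = zⁿ. Then there exist integers a, b, c with c = z² and a² + 28b³ = −27cⁿ, and moreover: (a) if (x, y) ≠ (0, 0), then a ≠ 0 and for every prime p with p mod 7 ∈ {2, 3, 4, 5} (i.e. p ≢ 0, ±1 (mod 7)), the p-adic valuation of a is divisible by 3; (b) if gcd(x, y) = 1 and n > 4, then gcd(c, 42ab) = 1. -/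
/-!
Write `θ = ζ₇ + ζ₇⁻¹` and let `N(u, v)` be the norm of `u - vθ`. Both cubic forms of the theorem
are `N` after a linear change of variables, which is unimodular away from `2`, so everything
reduces to `N(u, v) = zⁿ`. The classical syzygy between a binary cubic form of discriminant `49`,
its Hessian and its Jacobian covariant becomes `g² + 27 N² = 28 q³` with `q = u² + uv + v²`, and
since the cubic field is cyclic, `g` is again `N` in other variables. Take `a = g`, `b = -q`.

A prime `p` dividing `N(u, v)` with `u, v` coprime splits or ramifies in `ℚ(θ)`: Frobenius fixes
`ζ + ζ⁻¹`, so it sends `ζ` to `ζ` or `ζ⁻¹`, i.e. `p ≡ ±1 (mod 7)` unless `p = 7`. Hence for other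
primes the valuation of `N(u, v)` is three times that of `gcd(u, v)`.
-/

open Polynomial

section Coprime

variable {R : Type*} [CommRing R]

lemma isCoprime_self_sub {x y : R} (hxy : IsCoprime x y) : IsCoprime y (y - x) := by
  obtain ⟨s, t, hst⟩ := hxy
  exact ⟨s + t, -s, by linear_combination hst⟩

lemma isCoprime_of_sub_eq_mul {c v x y : R} (hxy : IsCoprime x y) (h : y - x = c * v) :
    IsCoprime y v :=
  (h ▸ isCoprime_self_sub hxy).of_mul_right_right

lemma exists_eq_mul_isCoprime [IsDomain R] [IsBezout R] [GCDMonoid R] (u v : R) :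
    ∃ d r s, u = d * r ∧ v = d * s ∧ IsCoprime r s := by
  obtain ⟨r, s, hr, hs, hunit⟩ := extract_gcd u v
  exact ⟨_, r, s, hr, hs, (gcd_isUnit_iff r s).1 hunit⟩

end Coprime

section Forms

variable {R : Type*} [CommRing R]

/-- The norm of `u - v(ζ₇ + ζ₇⁻¹)`, as a binary cubic form over any commutative ring; at `v = 1` it
is the minimal polynomial of `ζ₇ + ζ₇⁻¹`. -/
def normForm (u v : R) : R := u ^ 3 + u ^ 2 * v - 2 * u * v ^ 2 - v ^ 3

/-- The Hessian covariant of `normForm`, divided by its content `7`. -/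
def hessianForm (u v : R) : R := u ^ 2 + u * v + v ^ 2

/-- The Jacobian determinant `∂(normForm, hessianForm)/∂(u, v)`, written as `normForm` in new
variables so that its prime factors are governed by the same results. -/
def jacobianForm (u v : R) : R := normForm (v - u) (-u - 2 * v)

lemma normForm_mul_mul (d u v : R) : normForm (d * u) (d * v) = d ^ 3 * normForm u v := by
  simp only [normForm]; ring

lemma map_normForm {S : Type*} [CommRing S] (f : R →+* S) (u v : R) :
    f (normForm u v) = normForm (f u) (f v) := by
  simp only [normForm, map_sub, map_add, map_mul, map_pow, map_ofNat]

lemma cubic_eq_normForm_two_mul_sub (x y : R) :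
    x ^ 3 - 7 * x ^ 2 * y + 7 * x * y ^ 2 + 7 * y ^ 3 = normForm (2 * y) (y - x) := by
  simp only [normForm]; ring

lemma cubic_eq_normForm_sub_neg (x y : R) :
    x ^ 3 - 4 * x ^ 2 * y + 3 * x * y ^ 2 + y ^ 3 = normForm (x - y) (-y) := by
  simp only [normForm]; ring

lemma jacobianForm_sq_add_normForm_sq (u v : R) :
    jacobianForm u v ^ 2 + 27 * normForm u v ^ 2 = 28 * hessianForm u v ^ 3 := by
  simp only [jacobianForm, normForm, hessianForm]; ring

lemma isCoprime_normForm_hessianForm {u v : R} (huv : IsCoprime u v)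
    (h7 : IsCoprime (normForm u v) 7) : IsCoprime (normForm u v) (hessianForm u v) := by
  have hessian_v : IsCoprime v (hessianForm u v) := by
    rw [show hessianForm u v = u ^ 2 + v * (u + v) by simp only [hessianForm]; ring]
    exact huv.symm.pow_right.add_mul_left_right _
  have hessian_linear : IsCoprime (3 * u + v) (hessianForm u v) := by
    have linear_seven : IsCoprime (3 * u + v) 7 := by
      rw [show normForm u v = (3 * u + v) * (u * v - 2 * u ^ 2 - v ^ 2) + 7 * u ^ 3 by
        simp only [normForm]; ring] at h7
      exact h7.of_add_mul_left_left.of_mul_left_left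
    have linear_u : IsCoprime (3 * u + v) u := huv.symm.mul_add_right_left 3
    rw [show hessianForm u v = 7 * u ^ 2 + (3 * u + v) * (v - 2 * u) by
      simp only [hessianForm]; ring]
    exact (linear_seven.mul_right linear_u.pow_right).add_mul_left_right _
  rw [show normForm u v = -(v ^ 2 * (3 * u + v)) + hessianForm u v * u by
    simp only [normForm, hessianForm]; ring]
  exact (hessian_v.pow_left.mul_left hessian_linear).neg_left.add_mul_left_left _

lemma isCoprime_normForm_jacobianForm {u v : R} (huv : IsCoprime u v)
    (h2 : IsCoprime (normForm u v) 2) (h7 : IsCoprime (normForm u v) 7) :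
    IsCoprime (normForm u v) (jacobianForm u v) := by
  refine (IsCoprime.pow_right_iff two_pos).1 ?_
  rw [show jacobianForm u v ^ 2 =
      2 ^ 2 * 7 * hessianForm u v ^ 3 + normForm u v * (-27 * normForm u v) by
    linear_combination jacobianForm_sq_add_normForm_sq u v]
  exact ((h2.pow_right.mul_right h7).mul_right
    (isCoprime_normForm_hessianForm huv h7).pow_right).add_mul_left_right _

end Forms

section RootsModP

variable {K : Type*} [Field K]

lemma exists_add_inv_eq [IsAlgClosed K] (t : K) : ∃ ζ : K, ζ ≠ 0 ∧ ζ + ζ⁻¹ = t := by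
  have hdeg : (X ^ 2 - C t * X + 1 : K[X]).degree = 2 := by compute_degree!
  obtain ⟨ζ, hζ⟩ := IsAlgClosed.exists_root (X ^ 2 - C t * X + 1 : K[X]) (by simp [hdeg])
  have hroot : ζ ^ 2 - t * ζ + 1 = 0 := by simpa using hζ
  have hζ0 : ζ ≠ 0 := by
    rintro rfl
    simp at hroot
  refine ⟨ζ, hζ0, ?_⟩
  field_simp
  linear_combination hroot

lemma eval_cyclotomic_seven_eq {ζ : K} (hζ : ζ ≠ 0) :
    (cyclotomic 7 K).eval ζ = ζ ^ 3 * normForm (ζ + ζ⁻¹) 1 := by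
  have : Fact (Nat.Prime 7) := ⟨by norm_num⟩
  rw [cyclotomic_prime, eval_geom_sum]
  simp only [Finset.sum_range_succ, Finset.sum_range_zero, normForm]
  field_simp
  ring

lemma modEq_one_or_dvd_succ_of_add_inv_pow_eq {p n : ℕ} [ExpChar K p] {ζ : K}
    (hζ : IsPrimitiveRoot ζ n) (hζ0 : ζ ≠ 0) (h : (ζ + ζ⁻¹) ^ p = ζ + ζ⁻¹) :
    p ≡ 1 [MOD n] ∨ n ∣ p + 1 := by
  rw [add_pow_expChar, inv_pow] at h
  have hfactor : (ζ ^ p - ζ) * (ζ ^ (p + 1) - 1) = 0 := by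
    field_simp at h
    linear_combination h
  rcases mul_eq_zero.1 hfactor with hfix | hinv
  · left
    lift ζ to Kˣ using IsUnit.mk0 ζ hζ0
    rw [(IsPrimitiveRoot.coe_units_iff.1 hζ).eq_orderOf, ← pow_eq_pow_iff_modEq, pow_one]
    exact Units.ext (sub_eq_zero.1 hfix)
  · exact .inr (hζ.dvd_of_pow_eq_one _ (sub_eq_zero.1 hinv))

lemma mod_seven_of_normForm_eq_zero {p : ℕ} [Fact p.Prime] {t : ZMod p}
    (ht : normForm t 1 = 0) : p % 7 = 0 ∨ p % 7 = 1 ∨ p % 7 = 6 := by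
  by_cases h7 : (7 : ZMod p) = 0
  · have hdvd : p ∣ 7 := (ZMod.natCast_eq_zero_iff 7 p).1 (mod_cast h7)
    have := (Nat.prime_dvd_prime_iff_eq Fact.out (by norm_num)).1 hdvd
    omega
  let L := AlgebraicClosure (ZMod p)
  obtain ⟨ζ, hζ0, hζt⟩ := exists_add_inv_eq (algebraMap (ZMod p) L t)
  have : NeZero ((7 : ℕ) : L) :=
    ⟨fun h => h7 <| (algebraMap (ZMod p) L).injective <| by
      rw [map_ofNat, map_zero]; exact_mod_cast h⟩
  have hζ : IsPrimitiveRoot ζ 7 := by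
    rw [← isRoot_cyclotomic_iff, IsRoot, eval_cyclotomic_seven_eq hζ0, hζt,
      ← map_one (algebraMap (ZMod p) L), ← map_normForm, ht, map_zero, mul_zero]
  have hfrob : (ζ + ζ⁻¹) ^ p = ζ + ζ⁻¹ := by rw [hζt, ← map_pow, ZMod.pow_card]
  have := modEq_one_or_dvd_succ_of_add_inv_pow_eq hζ hζ0 hfrob
  simp only [Nat.ModEq] at this
  omega

end RootsModP

section Integers

variable {p n : ℕ} {u v x y z : ℤ}

lemma mod_seven_of_dvd_normForm (hp : p.Prime) (huv : IsCoprime u v)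
    (h : (p : ℤ) ∣ normForm u v) : p % 7 = 0 ∨ p % 7 = 1 ∨ p % 7 = 6 := by
  have : Fact p.Prime := ⟨hp⟩
  have hcast : normForm (u : ZMod p) v = 0 := by
    rwa [← ZMod.intCast_zmod_eq_zero_iff_dvd, ← eq_intCast (Int.castRingHom _), map_normForm] at h
  have hv : (v : ZMod p) ≠ 0 := by
    intro hv
    have hu : (u : ZMod p) = 0 := by simpa [normForm, hv] using hcast
    exact (Nat.prime_iff_prime_int.1 hp).not_isUnit <| huv.isUnit_of_dvd'
      ((ZMod.intCast_zmod_eq_zero_iff_dvd u p).1 hu) ((ZMod.intCast_zmod_eq_zero_iff_dvd v p).1 hv)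
  apply mod_seven_of_normForm_eq_zero (t := (u / v : ZMod p))
  have hscale := normForm_mul_mul (v : ZMod p) (u / v) 1
  rw [mul_div_cancel₀ _ hv, mul_one, hcast] at hscale
  exact (mul_eq_zero.1 hscale.symm).resolve_left (pow_ne_zero 3 hv)

lemma normForm_eq_zero_iff : normForm u v = 0 ↔ u = 0 ∧ v = 0 := by
  refine ⟨fun h => ?_, by rintro ⟨rfl, rfl⟩; simp [normForm]⟩
  obtain ⟨d, r, s, rfl, rfl, hrs⟩ := exists_eq_mul_isCoprime u v
  have hN : normForm r s ≠ 0 := fun h0 => by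
    simpa using mod_seven_of_dvd_normForm Nat.prime_two hrs (h0 ▸ dvd_zero _)
  rw [normForm_mul_mul] at h
  simp [pow_eq_zero_iff three_ne_zero |>.1 ((mul_eq_zero.1 h).resolve_right hN)]

lemma three_dvd_padicValInt_normForm (hp : p.Prime)
    (hp7 : p % 7 = 2 ∨ p % 7 = 3 ∨ p % 7 = 4 ∨ p % 7 = 5) (u v : ℤ) :
    3 ∣ padicValInt p (normForm u v) := by
  have : Fact p.Prime := ⟨hp⟩
  obtain ⟨d, r, s, rfl, rfl, hrs⟩ := exists_eq_mul_isCoprime u v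
  have hN : ¬ (p : ℤ) ∣ normForm r s := fun h => by
    have := mod_seven_of_dvd_normForm hp hrs h
    omega
  rw [normForm_mul_mul]
  rcases eq_or_ne d 0 with rfl | hd
  · simp
  have hN0 : normForm r s ≠ 0 := fun h0 => hN (h0 ▸ dvd_zero _)
  rw [padicValInt.mul (pow_ne_zero 3 hd) hN0,
    padicValInt.eq_zero_of_not_dvd hN, add_zero, padicValInt, Int.natAbs_pow,
    padicValNat.pow]
  exact dvd_mul_right 3 _

lemma not_fortyNine_dvd_normForm (huv : IsCoprime u v) : ¬ 49 ∣ normForm u v := by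
  rintro ⟨k, hk⟩
  have hprime : Prime (7 : ℤ) := by norm_num
  have hN : normForm u v = (u - 2 * v) ^ 3 + 7 * (v * (u - v) ^ 2) := by
    simp only [normForm]; ring
  obtain ⟨t, ht⟩ : 7 ∣ u - 2 * v :=
    hprime.dvd_of_dvd_pow (n := 3) ⟨7 * k - v * (u - v) ^ 2, by linear_combination hk - hN⟩
  obtain rfl : u = 2 * v + 7 * t := by linear_combination ht
  have hv : 7 ∣ v := hprime.dvd_of_dvd_pow (n := 3)
    ⟨k - 7 * t ^ 3 - 2 * v ^ 2 * t - 7 * v * t ^ 2, by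
      have := hk.symm.trans hN
      linarith⟩
  exact hprime.not_isUnit (huv.isUnit_of_dvd' ((hv.mul_left 2).add (dvd_mul_right 7 t)) hv)

lemma isCoprime_of_normForm_eq_pow (hn : 1 < n) (huv : IsCoprime u v)
    (h : normForm u v = z ^ n) :
    IsCoprime z (42 * jacobianForm u v * hessianForm u v) := by
  have isCoprime_prime (q : ℕ) (hq : q.Prime) (hq7 : ¬ (q % 7 = 0 ∨ q % 7 = 1 ∨ q % 7 = 6)) :
      IsCoprime (normForm u v) q :=
    ((Nat.prime_iff_prime_int.1 hq).coprime_iff_not_dvd.2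
      fun hd => hq7 (mod_seven_of_dvd_normForm hq huv hd)).symm
  have h2 : IsCoprime (normForm u v) 2 := isCoprime_prime 2 Nat.prime_two (by norm_num)
  have h3 : IsCoprime (normForm u v) 3 := isCoprime_prime 3 Nat.prime_three (by norm_num)
  have h7 : IsCoprime (normForm u v) 7 := by
    have hz : ¬ 7 ∣ z := fun hd => not_fortyNine_dvd_normForm huv <|
      h ▸ (pow_dvd_pow_of_dvd hd 2).trans (pow_dvd_pow z hn)
    rw [h]
    exact ((show Prime (7 : ℤ) by norm_num).coprime_iff_not_dvd.2 hz).symm.pow_left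
  have h42 : IsCoprime (normForm u v) 42 := (h2.mul_right h3).mul_right h7
  refine (IsCoprime.pow_left_iff (Nat.zero_lt_of_lt hn)).1 ?_
  rw [← h]
  exact (h42.mul_right (isCoprime_normForm_jacobianForm huv h2 h7)).mul_right
    (isCoprime_normForm_hessianForm huv h7)

lemma two_dvd_of_two_dvd_normForm_two_mul (h : 2 ∣ normForm (2 * u) v) : 2 ∣ v := by
  refine Int.prime_two.dvd_of_dvd_pow (n := 3) ?_
  rw [show v ^ 3 = 2 * (4 * u ^ 3 + 2 * u ^ 2 * v - 2 * u * v ^ 2) - normForm (2 * u) v by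
    simp only [normForm]; ring]
  exact (dvd_mul_right 2 _).sub h

lemma isCoprime_two_mul_sub_of_normForm_eq_pow (hn : 3 < n) (hxy : IsCoprime x y)
    (h : normForm (2 * y) (y - x) = z ^ n) : IsCoprime (2 * y) (y - x) := by
  have hodd : ¬ 2 ∣ y - x := by
    rintro ⟨v, hv⟩
    rw [hv, normForm_mul_mul] at h
    have hz : 2 ∣ z :=
      Int.prime_two.dvd_of_dvd_pow (h ▸ (dvd_pow_self 2 three_ne_zero).mul_right _)
    have h16 : 2 ^ 3 * 2 ∣ 2 ^ 3 * normForm y v :=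
      h ▸ (pow_dvd_pow_of_dvd hz 4).trans (pow_dvd_pow z hn)
    have hN : 2 ∣ normForm y v := Int.dvd_of_mul_dvd_mul_left (by norm_num) h16
    simpa using mod_seven_of_dvd_normForm Nat.prime_two (isCoprime_of_sub_eq_mul hxy hv) hN
  exact (Int.prime_two.coprime_iff_not_dvd.2 hodd).mul_left (isCoprime_self_sub hxy)

lemma exists_normForm_eq_pow
    (h : (∃ k : ℤ, (k = 1 ∨ k = 8) ∧
            x ^ 3 - 7 * x ^ 2 * y + 7 * x * y ^ 2 + 7 * y ^ 3 = k * z ^ n) ∨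
         x ^ 3 - 4 * x ^ 2 * y + 3 * x * y ^ 2 + y ^ 3 = z ^ n) :
    ∃ u v : ℤ, normForm u v = z ^ n ∧ (u = 0 ∧ v = 0 → x = 0 ∧ y = 0) ∧
      (IsCoprime x y → 3 < n → IsCoprime u v) := by
  rcases h with ⟨k, rfl | rfl, h⟩ | h
  · rw [cubic_eq_normForm_two_mul_sub, one_mul] at h
    exact ⟨2 * y, y - x, h, by omega,
      fun hxy hn => isCoprime_two_mul_sub_of_normForm_eq_pow hn hxy h⟩
  · rw [cubic_eq_normForm_two_mul_sub] at h
    obtain ⟨v, hv⟩ : 2 ∣ y - x := two_dvd_of_two_dvd_normForm_two_mul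
      (h ▸ Dvd.dvd.mul_right (by norm_num) _)
    rw [hv, normForm_mul_mul] at h
    exact ⟨y, v, by linarith, by omega, fun hxy _ => isCoprime_of_sub_eq_mul hxy hv⟩
  · rw [cubic_eq_normForm_sub_neg] at h
    exact ⟨x - y, -y, h, by omega, fun hxy _ =>
      neg_sub y x ▸ (isCoprime_self_sub hxy).symm.neg_neg⟩

end Integers

/-- Integer solutions of `x³ − 7x²y + 7xy² + 7y³ = k·zⁿ` (for `k ∈ {1,8}`) or of
`x³ − 4x²y + 3xy² + y³ = zⁿ` give rise to solutions of `a² + 28b³ = −27cⁿ`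
with `c = z²`, satisfying additional arithmetic conditions. -/
theorem norm_to_fermat_28 (n : ℕ) (hn : 1 ≤ n) (x y z : ℤ)
    (h : (∃ k : ℤ, (k = 1 ∨ k = 8) ∧
            x ^ 3 - 7 * x ^ 2 * y + 7 * x * y ^ 2 + 7 * y ^ 3 = k * z ^ n) ∨
         x ^ 3 - 4 * x ^ 2 * y + 3 * x * y ^ 2 + y ^ 3 = z ^ n) :
    ∃ a b c : ℤ, c = z ^ 2 ∧ a ^ 2 + 28 * b ^ 3 = -27 * c ^ n ∧
      ((x, y) ≠ (0, 0) → a ≠ 0 ∧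
        ∀ p : ℕ, p.Prime → (p % 7 = 2 ∨ p % 7 = 3 ∨ p % 7 = 4 ∨ p % 7 = 5) →
          3 ∣ padicValInt p a) ∧
      (Int.gcd x y = 1 → 4 < n → Int.gcd c (42 * a * b) = 1) := by
  obtain ⟨u, v, hN, hzero, hcoprime⟩ := exists_normForm_eq_pow h
  refine ⟨jacobianForm u v, -hessianForm u v, z ^ 2, rfl, ?_, fun hxy => ⟨?_, ?_⟩, ?_⟩
  · rw [pow_right_comm, ← hN]
    linear_combination jacobianForm_sq_add_normForm_sq u v
  · rw [jacobianForm, Ne, normForm_eq_zero_iff]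
    exact fun h0 => hxy (by simpa using hzero (by omega))
  · exact fun p hp hp7 => three_dvd_padicValInt_normForm hp hp7 _ _
  · intro hxy hn
    have huv := hcoprime (Int.isCoprime_iff_gcd_eq_one.2 hxy) (by omega)
    rw [← Int.isCoprime_iff_gcd_eq_one, mul_neg]
    exact (isCoprime_of_normForm_eq_pow (by omega) huv hN).pow_left.neg_right
end

section
/- Let A and B be finite groups and let G be a subgroup of A × B. Let π_A : A × B → A and π_B : A × B → B denote the two projection homomorphisms. Then the index [A × B : G] divides [A : π_A(G)] · [B : π_B(G)] · gcd(|π_A(G)|, |π_B(G)|). -/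
/-!
The projection to `B` splits the index of `G` as `[A × B : G] = [B : π_B(G)] · [A : G ∩ A]`, where
`G ∩ A` is the fibre of `G` over `1`. Since `G ∩ A ≤ π_A(G)`, the last factor is
`[A : π_A(G)] · [π_A(G) : G ∩ A]`, and `[π_A(G) : G ∩ A]` divides `|π_A(G)|`. Exchanging the two
factors gives the same divisibility with `|π_B(G)|`, and hence with the gcd.
-/

section IndexMap

variable {Γ Δ : Type*} [Group Γ] [Group Δ]

theorem relIndex_normal_sup_self (H N : Subgroup Γ) [N.Normal] :
    H.relIndex (N ⊔ H) = H.relIndex N := by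
  let cosetMap := Subgroup.quotientSubgroupOfEmbeddingOfLE H (le_sup_left : N ≤ N ⊔ H)
  have cosetMap_surjective : Function.Surjective cosetMap := by
    rintro ⟨x, hx⟩
    obtain ⟨n, hn, h, hh, rfl⟩ := Subgroup.mem_sup_of_normal_left.mp hx
    refine ⟨QuotientGroup.mk ⟨n, hn⟩, QuotientGroup.eq.mpr ?_⟩
    simpa [Subgroup.mem_subgroupOf] using hh
  exact (Nat.card_congr (Equiv.ofBijective cosetMap ⟨cosetMap.injective, cosetMap_surjective⟩)).symm

theorem index_map_mul_relIndex_ker (H : Subgroup Γ) {f : Γ →* Δ} (hf : Function.Surjective f) :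
    (H.map f).index * H.relIndex f.ker = H.index := by
  have index_map_eq : (H.map f).index = (f.ker ⊔ H).index := by
    rw [Subgroup.index_map, f.range_eq_top_of_surjective hf, Subgroup.index_top, mul_one, sup_comm]
  rw [index_map_eq, ← relIndex_normal_sup_self, mul_comm,
    Subgroup.relIndex_mul_index le_sup_right]

end IndexMap

section Product

variable {A B : Type*} [Group A] [Group B] (G : Subgroup (A × B))

theorem comap_inl_le_map_fst : G.comap (MonoidHom.inl A B) ≤ G.map (MonoidHom.fst A B) :=
  fun a ha => ⟨(a, 1), ha, rfl⟩

theorem index_comap_inl : (G.comap (MonoidHom.inl A B)).index =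
    G.relIndex (MonoidHom.snd A B).ker := by
  have range_inl : (MonoidHom.inl A B).range = (MonoidHom.snd A B).ker := by
    ext ⟨a, b⟩
    simp [Subgroup.mem_prod, eq_comm]
  rw [Subgroup.index_comap, range_inl]

theorem index_eq_index_map_mul_relIndex_comap_inl :
    G.index = (G.map (MonoidHom.fst A B)).index * (G.map (MonoidHom.snd A B)).index *
      (G.comap (MonoidHom.inl A B)).relIndex (G.map (MonoidHom.fst A B)) := by
  rw [← index_map_mul_relIndex_ker G (f := MonoidHom.snd A B) Prod.snd_surjective,
    ← index_comap_inl, ← Subgroup.relIndex_mul_index (comap_inl_le_map_fst G)]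
  ring

theorem index_dvd_index_map_mul_card_map_fst :
    G.index ∣ (G.map (MonoidHom.fst A B)).index * (G.map (MonoidHom.snd A B)).index *
      Nat.card (G.map (MonoidHom.fst A B)) := by
  rw [index_eq_index_map_mul_relIndex_comap_inl]
  exact mul_dvd_mul_left _ (Subgroup.relIndex_dvd_card _ _)

theorem index_dvd_index_map_mul_card_map_snd :
    G.index ∣ (G.map (MonoidHom.fst A B)).index * (G.map (MonoidHom.snd A B)).index *
      Nat.card (G.map (MonoidHom.snd A B)) := by
  let swap : A × B ≃* B × A := MulEquiv.prodComm
  have map_fst_swap : (G.map (swap : A × B →* B × A)).map (MonoidHom.fst B A) =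
      G.map (MonoidHom.snd A B) := Subgroup.map_map ..
  have map_snd_swap : (G.map (swap : A × B →* B × A)).map (MonoidHom.snd B A) =
      G.map (MonoidHom.fst A B) := Subgroup.map_map ..
  have dvd_swap := index_dvd_index_map_mul_card_map_fst (G.map (swap : A × B →* B × A))
  rwa [map_fst_swap, map_snd_swap, Subgroup.index_map_equiv,
    mul_comm (G.map (MonoidHom.snd A B)).index] at dvd_swap

theorem index_subgroup_product_general :
    G.index ∣ (G.map (MonoidHom.fst A B)).index * (G.map (MonoidHom.snd A B)).index *
      Nat.gcd (Nat.card (G.map (MonoidHom.fst A B))) (Nat.card (G.map (MonoidHom.snd A B))) := by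
  rw [← Nat.gcd_mul_left]
  exact Nat.dvd_gcd (index_dvd_index_map_mul_card_map_fst G)
    (index_dvd_index_map_mul_card_map_snd G)

end Product

/-- For a subgroup `G` of a product of finite groups `A × B`, the index of `G` divides
`[A : π_A(G)] · [B : π_B(G)] · gcd(|π_A(G)|, |π_B(G)|)`. -/
theorem index_subgroup_product (A B : Type*) [Group A] [Group B] [Finite A] [Finite B]
    (G : Subgroup (A × B)) :
    G.index ∣ (G.map (MonoidHom.fst A B)).index * (G.map (MonoidHom.snd A B)).index *
      Nat.gcd (Nat.card (G.map (MonoidHom.fst A B))) (Nat.card (G.map (MonoidHom.snd A B))) :=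
  index_subgroup_product_general G
end

section
/- For every nonzero rational number t, the 2-adic valuation of the rational number (t² + 245t + 2401)³ · (t² + 13t + 49) / t⁷ is at most 0. -/
/-!
Modulo `2` both quadratic factors reduce to `x² + x + 1`, which has no root in `𝔽₂`. Writing
`t = u / d` in lowest terms, `d² (t² + b t + c) = u² + b u d + c d²` is therefore a `2`-adic unit,
so each quadratic factor has valuation exactly `-2 v₂(d)`. The numerator consists of four such
factors, whence `v₂(j_B(t)) = -8 v₂(d) - 7 (v₂(u) - v₂(d)) = -(v₂(d) + 7 v₂(u))`.
-/

theorem eq_zero_and_eq_zero_of_quadratic_form_eq_zero {K : Type*} [Field K] {b c : K}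
    (no_root : ∀ x : K, x ^ 2 + b * x + c ≠ 0) {u v : K}
    (form_eq_zero : u ^ 2 + b * u * v + c * v ^ 2 = 0) : u = 0 ∧ v = 0 := by
  have v_eq_zero : v = 0 := by
    by_contra v_ne_zero
    apply no_root (u / v)
    field_simp
    linear_combination form_eq_zero
  subst v_eq_zero
  simpa using form_eq_zero

theorem zmod_two_sq_add_mul_add_ne_zero_of_odd {b c : ℤ} (hb : Odd b) (hc : Odd c)
    (x : ZMod 2) : x ^ 2 + (b : ZMod 2) * x + (c : ZMod 2) ≠ 0 := by
  rw [ZMod.intCast_eq_one_iff_odd.mpr hb, ZMod.intCast_eq_one_iff_odd.mpr hc]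
  decide +revert

theorem sq_add_mul_add_eq_quadratic_form_div_den_sq (b c : ℤ) (t : ℚ) :
    t ^ 2 + b * t + c =
      ((t.num ^ 2 + b * t.num * t.den + c * t.den ^ 2 : ℤ) : ℚ) / (t.den : ℚ) ^ 2 := by
  have den_ne_zero : (t.den : ℚ) ≠ 0 := Nat.cast_ne_zero.mpr t.den_nz
  push_cast
  nth_rewrite 1 2 [← Rat.num_div_den t]
  field_simp

section NoRootModP

variable {p : ℕ} [Fact p.Prime] {b c : ℤ}

theorem not_dvd_quadratic_form_num_den
    (no_root : ∀ x : ZMod p, x ^ 2 + (b : ZMod p) * x + (c : ZMod p) ≠ 0) (t : ℚ) :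
    ¬ (p : ℤ) ∣ t.num ^ 2 + b * t.num * t.den + c * t.den ^ 2 := by
  intro p_dvd_form
  have form_eq_zero : (t.num : ZMod p) ^ 2 + b * t.num * t.den + c * t.den ^ 2 = 0 := by
    exact_mod_cast (ZMod.intCast_zmod_eq_zero_iff_dvd _ p).mpr p_dvd_form
  obtain ⟨num_eq_zero, den_eq_zero⟩ :=
    eq_zero_and_eq_zero_of_quadratic_form_eq_zero no_root form_eq_zero
  have p_dvd_num : p ∣ t.num.natAbs :=
    Int.natCast_dvd.mp ((ZMod.intCast_zmod_eq_zero_iff_dvd _ p).mp num_eq_zero)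
  have p_dvd_den : p ∣ t.den := (ZMod.natCast_eq_zero_iff _ p).mp den_eq_zero
  exact Nat.not_coprime_of_dvd_of_dvd (Fact.out : p.Prime).one_lt p_dvd_num p_dvd_den t.reduced

theorem rat_sq_add_mul_add_ne_zero
    (no_root : ∀ x : ZMod p, x ^ 2 + (b : ZMod p) * x + (c : ZMod p) ≠ 0) (t : ℚ) :
    t ^ 2 + b * t + c ≠ 0 := by
  have form_ne_zero : t.num ^ 2 + b * t.num * t.den + c * t.den ^ 2 ≠ 0 := fun form_eq_zero ↦
    not_dvd_quadratic_form_num_den no_root t (form_eq_zero ▸ dvd_zero _)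
  rw [sq_add_mul_add_eq_quadratic_form_div_den_sq]
  exact div_ne_zero (Int.cast_ne_zero.mpr form_ne_zero)
    (pow_ne_zero 2 (Nat.cast_ne_zero.mpr t.den_nz))

theorem padicValRat_sq_add_mul_add
    (no_root : ∀ x : ZMod p, x ^ 2 + (b : ZMod p) * x + (c : ZMod p) ≠ 0) (t : ℚ) :
    padicValRat p (t ^ 2 + b * t + c) = -2 * padicValNat p t.den := by
  have quadratic_ne_zero := rat_sq_add_mul_add_ne_zero no_root t
  rw [sq_add_mul_add_eq_quadratic_form_div_den_sq] at quadratic_ne_zero ⊢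
  obtain ⟨form_ne_zero, den_sq_ne_zero⟩ := div_ne_zero_iff.mp quadratic_ne_zero
  rw [padicValRat.div form_ne_zero den_sq_ne_zero, padicValRat.of_int,
    padicValInt.eq_zero_of_not_dvd (not_dvd_quadratic_form_num_den no_root t),
    padicValRat.pow, padicValRat.of_nat]
  push_cast
  ring

end NoRootModP

/-- The `2`-adic valuation of `j_B(t) = (t² + 245t + 2401)³(t² + 13t + 49)/t⁷` is
at most `0` for every nonzero rational `t`. -/
theorem two_adic_valuation_jB (t : ℚ) (ht : t ≠ 0) :
    padicValRat 2 ((t ^ 2 + 245 * t + 2401) ^ 3 * (t ^ 2 + 13 * t + 49) / t ^ 7) ≤ 0 := by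
  have no_root₁ := zmod_two_sq_add_mul_add_ne_zero_of_odd (b := 245) (c := 2401)
    (by decide) (by decide)
  have no_root₂ := zmod_two_sq_add_mul_add_ne_zero_of_odd (b := 13) (c := 49)
    (by decide) (by decide)
  have ne_zero₁ : t ^ 2 + 245 * t + 2401 ≠ 0 := mod_cast rat_sq_add_mul_add_ne_zero no_root₁ t
  have ne_zero₂ : t ^ 2 + 13 * t + 49 ≠ 0 := mod_cast rat_sq_add_mul_add_ne_zero no_root₂ t
  have val₁ : padicValRat 2 (t ^ 2 + 245 * t + 2401) = -2 * padicValNat 2 t.den :=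
    mod_cast padicValRat_sq_add_mul_add no_root₁ t
  have val₂ : padicValRat 2 (t ^ 2 + 13 * t + 49) = -2 * padicValNat 2 t.den :=
    mod_cast padicValRat_sq_add_mul_add no_root₂ t
  have val_t : padicValRat 2 t = padicValInt 2 t.num - padicValNat 2 t.den := rfl
  calc padicValRat 2 ((t ^ 2 + 245 * t + 2401) ^ 3 * (t ^ 2 + 13 * t + 49) / t ^ 7)
      = 3 * padicValRat 2 (t ^ 2 + 245 * t + 2401) + padicValRat 2 (t ^ 2 + 13 * t + 49)
          - 7 * padicValRat 2 t := by
        rw [padicValRat.div (mul_ne_zero (pow_ne_zero 3 ne_zero₁) ne_zero₂) (pow_ne_zero 7 ht),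
          padicValRat.mul (pow_ne_zero 3 ne_zero₁) ne_zero₂, padicValRat.pow, padicValRat.pow]
        norm_cast
    _ = -(padicValNat 2 t.den + 7 * padicValInt 2 t.num) := by
        rw [val₁, val₂, val_t]
        ring
    _ ≤ 0 := by lia
end

section
/- Let a, b, c be integers with c ≠ 0. (1) If a² + 28b³ = 27c⁷, then the Weierstrass curve E : y² = x³ + 189b·x + 189a over ℚ has discriminant Δ = −2⁴·3¹²·7²·c⁷ ≠ 0 and j-invariant c₄³/Δ = 2⁸·7·b³/c⁷. (2) If a² + 196b³ = 27c⁷, then the Weierstrass curve F : y² = x³ + 1323b·x + 1323a over ℚ has discriminant Δ = −2⁴·3¹²·7⁴·c⁷ ≠ 0 and j-invariant c₄³/Δ = 2⁸·7²·b³/c⁷. -/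
/-!
Both curves belong to the family `y² = x³ + 27dbx + 27da`, with `d = 7` for `E` and `d = 7²` for
`F`. Its discriminant is `-2⁴ 3⁹ d² (a² + 4db³)`, and the bracket is exactly the left-hand side of
the Fermat equation, so the discriminant is `-2⁴ 3¹² d² N` when `a² + 4db³ = 27N`. Since
`c₄ = -2⁴ 3⁴ db`, the powers of `3` cancel in `c₄³ / Δ`.
-/

/-- The Weierstrass curve `y² = x³ + 27dbx + 27da`, which is the quadratic twist by `-3` of the
curve `y² = x³ + 3dbx - da` attached to a solution of `a² + 4db³ = 27N`. The parameters `d = 7` and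
`d = 7²` give the curves `E` and `F`. -/
def fermatCurve {R : Type*} [CommRing R] (d a b : R) : WeierstrassCurve R :=
  ⟨0, 0, 0, 27 * d * b, 27 * d * a⟩

namespace fermatCurve

section CommRing

variable {R : Type*} [CommRing R] (d a b : R)

instance : (fermatCurve d a b).IsShortNF := ⟨rfl, rfl, rfl⟩

lemma c₄_eq : (fermatCurve d a b).c₄ = -2 ^ 4 * 3 ^ 4 * d * b := by
  rw [WeierstrassCurve.c₄_of_isShortNF, fermatCurve]
  ring

lemma Δ_eq : (fermatCurve d a b).Δ = -2 ^ 4 * 3 ^ 9 * d ^ 2 * (a ^ 2 + 4 * d * b ^ 3) := by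
  rw [WeierstrassCurve.Δ_of_isShortNF, fermatCurve]
  ring

variable {d a b} {N : R}

lemma Δ_eq_of_fermat (h : a ^ 2 + 4 * d * b ^ 3 = 27 * N) :
    (fermatCurve d a b).Δ = -2 ^ 4 * 3 ^ 12 * d ^ 2 * N := by
  rw [Δ_eq, h]
  ring

lemma c₄_pow_three_mul_eq_of_fermat (h : a ^ 2 + 4 * d * b ^ 3 = 27 * N) :
    (fermatCurve d a b).c₄ ^ 3 * N = 2 ^ 8 * d * b ^ 3 * (fermatCurve d a b).Δ := by
  rw [Δ_eq_of_fermat h, c₄_eq]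
  ring

end CommRing

section Field

variable {K : Type*} [Field K] {d a b N : K}

lemma Δ_ne_zero_of_fermat (h2 : (2 : K) ≠ 0) (h3 : (3 : K) ≠ 0) (hd : d ≠ 0) (hN : N ≠ 0)
    (h : a ^ 2 + 4 * d * b ^ 3 = 27 * N) : (fermatCurve d a b).Δ ≠ 0 := by
  rw [Δ_eq_of_fermat h]
  simp [h2, h3, hd, hN]

lemma c₄_pow_three_div_Δ_of_fermat (hΔ : (fermatCurve d a b).Δ ≠ 0) (hN : N ≠ 0)
    (h : a ^ 2 + 4 * d * b ^ 3 = 27 * N) :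
    (fermatCurve d a b).c₄ ^ 3 / (fermatCurve d a b).Δ = 2 ^ 8 * d * b ^ 3 / N :=
  (div_eq_div_iff hΔ hN).mpr (c₄_pow_three_mul_eq_of_fermat h)

end Field

end fermatCurve

open fermatCurve in
theorem disc_j_Eabc_Fabc_general {K : Type*} [Field K] {d a b N : K} (h2 : (2 : K) ≠ 0)
    (h3 : (3 : K) ≠ 0) (hd : d ≠ 0) (hN : N ≠ 0) (h : a ^ 2 + 4 * d * b ^ 3 = 27 * N) :
    (fermatCurve d a b).Δ = -2 ^ 4 * 3 ^ 12 * d ^ 2 * N ∧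
      (fermatCurve d a b).Δ ≠ 0 ∧
      (fermatCurve d a b).c₄ ^ 3 / (fermatCurve d a b).Δ = 2 ^ 8 * d * b ^ 3 / N :=
  have hΔ := Δ_ne_zero_of_fermat h2 h3 hd hN h
  ⟨Δ_eq_of_fermat h, hΔ, c₄_pow_three_div_Δ_of_fermat hΔ hN h⟩

/-- Discriminants and `j`-invariants of the elliptic curves `E_{(a,b,c)}` and
`F_{(a,b,c)}` attached to solutions of the generalised Fermat equations
`a² + 28b³ = 27c⁷` and `a² + 196b³ = 27c⁷`. -/
theorem disc_j_Eabc_Fabc (a b c : ℤ) (hc : c ≠ 0) :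
    (a ^ 2 + 28 * b ^ 3 = 27 * c ^ 7 →
      (⟨0, 0, 0, 189 * (b : ℚ), 189 * (a : ℚ)⟩ : WeierstrassCurve ℚ).Δ
          = -2 ^ 4 * 3 ^ 12 * 7 ^ 2 * (c : ℚ) ^ 7 ∧
      (⟨0, 0, 0, 189 * (b : ℚ), 189 * (a : ℚ)⟩ : WeierstrassCurve ℚ).Δ ≠ 0 ∧
      (⟨0, 0, 0, 189 * (b : ℚ), 189 * (a : ℚ)⟩ : WeierstrassCurve ℚ).c₄ ^ 3 /
          (⟨0, 0, 0, 189 * (b : ℚ), 189 * (a : ℚ)⟩ : WeierstrassCurve ℚ).Δ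
        = 2 ^ 8 * 7 * (b : ℚ) ^ 3 / (c : ℚ) ^ 7) ∧
    (a ^ 2 + 196 * b ^ 3 = 27 * c ^ 7 →
      (⟨0, 0, 0, 1323 * (b : ℚ), 1323 * (a : ℚ)⟩ : WeierstrassCurve ℚ).Δ
          = -2 ^ 4 * 3 ^ 12 * 7 ^ 4 * (c : ℚ) ^ 7 ∧
      (⟨0, 0, 0, 1323 * (b : ℚ), 1323 * (a : ℚ)⟩ : WeierstrassCurve ℚ).Δ ≠ 0 ∧
      (⟨0, 0, 0, 1323 * (b : ℚ), 1323 * (a : ℚ)⟩ : WeierstrassCurve ℚ).c₄ ^ 3 /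
          (⟨0, 0, 0, 1323 * (b : ℚ), 1323 * (a : ℚ)⟩ : WeierstrassCurve ℚ).Δ
        = 2 ^ 8 * 7 ^ 2 * (b : ℚ) ^ 3 / (c : ℚ) ^ 7) := by
  have hN : (c : ℚ) ^ 7 ≠ 0 := pow_ne_zero 7 (Int.cast_ne_zero.mpr hc)
  rw [show (189 : ℚ) = 27 * 7 by norm_num, show (1323 : ℚ) = 27 * 7 ^ 2 by norm_num,
    show (7 : ℚ) ^ 4 = (7 ^ 2) ^ 2 by norm_num]
  refine ⟨fun h ↦ ?_, fun h ↦ ?_⟩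
  · have hE : (a : ℚ) ^ 2 + 4 * 7 * (b : ℚ) ^ 3 = 27 * (c : ℚ) ^ 7 := mod_cast h
    exact disc_j_Eabc_Fabc_general two_ne_zero three_ne_zero (by norm_num) hN hE
  · have hF : (a : ℚ) ^ 2 + 4 * 7 ^ 2 * (b : ℚ) ^ 3 = 27 * (c : ℚ) ^ 7 := mod_cast h
    exact disc_j_Eabc_Fabc_general two_ne_zero three_ne_zero (by norm_num) hN hF
end

section
/- Let a, b, c be integers with a² + 28b³ = 27c⁷, gcd(c, 42ab) = 1, and either 3 ∤ a or 27 ∣ a. (1) If 27 ∣ a, then 3 ∣ b, and the Weierstrass curve y² = x³ + (7b/3)·x + (7a/27) has integer coefficients and discriminant Δ = −2⁴·7²·c⁷. (2) If 3 ∤ a, let a₀ = 1 if a ≡ 1 (mod 3) and a₀ = −1 if a ≡ 2 (mod 3); then 3 divides 1 + 7b, 27 divides 7a − a₀ − 21a₀b, and the Weierstrass curve y² = x³ − a₀·x² + ((1 + 7b)/3)·x + ((7a − a₀ − 21a₀b)/27) has integer coefficients and discriminant Δ = −2⁴·7²·c⁷. In both cases the discriminant is coprime to 3. -/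
/-!
Over a field in which `3` is invertible, the two Weierstrass models differ by the translation
`x ↦ x - s / 3` with `s = ±1`, so they have the same discriminant `-2⁴ · 7² · (a² + 28b³) / 27`.

Integrality is a computation modulo `27`, where `28 ≡ 1`. If `a ≡ s (mod 3)` and `27 ∣ a² + b³`,
then `b ≡ -1 (mod 3)`, so `b³ - 3b - 2 = (b + 1)²(b - 2)` vanishes modulo `27` and
`a² ≡ -3b - 2`. In particular `a² ≡ 1 (mod 9)`, which lifts to `a ≡ s (mod 9)`. Hence
`(a - s)(a + 2s) = a² + sa - 2` vanishes modulo `27` as well, and eliminating `a²` gives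
`a ≡ s(3b + 4)`; multiplying by `7` yields `7a ≡ s(1 + 21b)`.
-/

section Divisibility

variable {R : Type*} [CommRing R] {a b s : R}

theorem three_dvd_of_three_dvd_sq_add_cube (hprime : Prime (3 : R)) (ha : 3 ∣ a)
    (h : 3 ∣ a ^ 2 + b ^ 3) : 3 ∣ b :=
  hprime.dvd_of_dvd_pow <| (dvd_add_right (dvd_pow ha two_ne_zero)).mp h

theorem three_dvd_add_one_of_three_dvd_sq_add_cube (hprime : Prime (3 : R)) (hs : s ^ 2 = 1)
    (has : 3 ∣ a - s) (h : 3 ∣ a ^ 2 + b ^ 3) : 3 ∣ b + 1 := by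
  have hcube : (b + 1) ^ 3 = a ^ 2 + b ^ 3 - (a - s) * (a + s) + 3 * (b ^ 2 + b) := by
    linear_combination -hs
  refine hprime.dvd_of_dvd_pow (n := 3) ?_
  rw [hcube]
  exact dvd_add (dvd_sub h (has.mul_right _)) (dvd_mul_right _ _)

theorem twentySeven_dvd_cube_sub_three_mul_sub_two (hb : 3 ∣ b + 1) :
    27 ∣ b ^ 3 - 3 * b - 2 := by
  have hb' : 3 ∣ b - 2 := by
    convert dvd_sub hb (dvd_refl 3) using 1
    ring
  convert mul_dvd_mul (mul_dvd_mul hb hb) hb' using 1 <;> ring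

theorem nine_dvd_sub_of_nine_dvd_sq_sub_one (hs : s ^ 2 = 1) (has : 3 ∣ a - s)
    (h : 9 ∣ a ^ 2 - 1) : 9 ∣ a - s := by
  have hcoprime : IsCoprime (3 : R) (a + s) := by
    obtain ⟨k, hk⟩ := has
    exact ⟨1 + s * k, -s, by linear_combination -s * hk - 2 * hs⟩
  have hcoprime_nine : IsCoprime (9 : R) (a + s) := by
    convert hcoprime.pow_left (m := 2) using 1
    norm_num
  refine hcoprime_nine.dvd_of_dvd_mul_right ?_
  convert h using 1
  linear_combination -hs

theorem twentySeven_dvd_sub_of_twentySeven_dvd_sq_add_cube (hs : s ^ 2 = 1) (has : 3 ∣ a - s)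
    (hb : 3 ∣ b + 1) (h : 27 ∣ a ^ 2 + b ^ 3) : 27 ∣ a - s * (3 * b + 4) := by
  have hsq : 27 ∣ a ^ 2 + 3 * b + 2 := by
    convert dvd_sub h (twentySeven_dvd_cube_sub_three_mul_sub_two hb) using 1
    ring
  have hnine : 9 ∣ a - s := by
    refine nine_dvd_sub_of_nine_dvd_sq_sub_one hs has ?_
    have hnine_sq : 9 ∣ a ^ 2 + 3 * b + 2 := .trans ⟨3, by norm_num⟩ hsq
    have hnine_b : 9 ∣ 3 * (b + 1) := by
      convert mul_dvd_mul_left 3 hb using 1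
      norm_num
    convert dvd_sub hnine_sq hnine_b using 1
    ring
  have hthree : 3 ∣ a + 2 * s := by
    convert dvd_add has (dvd_mul_right 3 s) using 1
    ring
  have hprod : 27 ∣ (a - s) * (a + 2 * s) := by
    convert mul_dvd_mul hnine hthree using 1
    norm_num
  convert (dvd_sub hprod hsq).mul_left s using 1
  linear_combination -(a - 2 * s) * hs

end Divisibility

theorem sq_eq_one_and_three_dvd_sub_of_eq_ite {a s : ℤ} (ha : ¬ 3 ∣ a)
    (hs : s = if a % 3 = 1 then 1 else -1) : s ^ 2 = 1 ∧ 3 ∣ a - s := by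
  split_ifs at hs <;> subst hs <;> exact ⟨by norm_num, by omega⟩

section Discriminant

variable {K : Type*} [Field K] {a b d s : K}

theorem twentySeven_ne_zero_of_three_ne_zero (h3 : (3 : K) ≠ 0) : (27 : K) ≠ 0 := by
  convert pow_ne_zero 3 h3 using 1
  norm_num

theorem discriminant_short_model (h3 : (3 : K) ≠ 0) (h : a ^ 2 + 28 * b ^ 3 = 27 * d) :
    (⟨0, 0, 0, 7 * b / 3, 7 * a / 27⟩ : WeierstrassCurve K).Δ = -2 ^ 4 * 7 ^ 2 * d := by
  have h27 : (27 : K) ≠ 0 := twentySeven_ne_zero_of_three_ne_zero h3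
  let W : WeierstrassCurve K := ⟨0, 0, 0, 7 * b / 3, 7 * a / 27⟩
  have : W.IsShortNF := ⟨rfl, rfl, rfl⟩
  calc W.Δ = -16 * (4 * (7 * b / 3) ^ 3 + 27 * (7 * a / 27) ^ 2) := W.Δ_of_isShortNF
    _ = -16 * 49 * ((a ^ 2 + 28 * b ^ 3) / 27) := by field_simp; ring
    _ = -2 ^ 4 * 7 ^ 2 * d := by rw [h]; field_simp; ring

theorem translate_short_model (h3 : (3 : K) ≠ 0) (hs : s ^ 2 = 1) :
    (⟨1, -(s / 3), 0, 0⟩ : WeierstrassCurve.VariableChange K) •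
        (⟨0, 0, 0, 7 * b / 3, 7 * a / 27⟩ : WeierstrassCurve K) =
      ⟨0, -s, 0, (1 + 7 * b) / 3, (7 * a - s - 21 * s * b) / 27⟩ := by
  have h27 : (27 : K) ≠ 0 := twentySeven_ne_zero_of_three_ne_zero h3
  rw [WeierstrassCurve.variableChange_def]
  ext <;> simp only [inv_one, Units.val_one]
  · ring
  · field_simp; ring
  · ring
  · field_simp
    linear_combination hs
  · field_simp
    linear_combination -27 * s * hs

theorem discriminant_translated_model (h3 : (3 : K) ≠ 0) (hs : s ^ 2 = 1)
    (h : a ^ 2 + 28 * b ^ 3 = 27 * d) :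
    (⟨0, -s, 0, (1 + 7 * b) / 3, (7 * a - s - 21 * s * b) / 27⟩ : WeierstrassCurve K).Δ =
      -2 ^ 4 * 7 ^ 2 * d := by
  rw [← translate_short_model h3 hs, WeierstrassCurve.variableChange_Δ, inv_one, Units.val_one,
    one_pow, one_mul, discriminant_short_model h3 h]

end Discriminant

theorem twist_good_reduction_28_general (a b d : ℤ)
    (heq : a ^ 2 + 28 * b ^ 3 = 27 * d) (hd : IsCoprime d 3) :
    ((27 : ℤ) ∣ a → (3 : ℤ) ∣ b ∧
      (⟨0, 0, 0, 7 * (b : ℚ) / 3, 7 * (a : ℚ) / 27⟩ : WeierstrassCurve ℚ).Δ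
        = -2 ^ 4 * 7 ^ 2 * (d : ℚ)) ∧
    (¬ (3 : ℤ) ∣ a →
      ∀ a₀ : ℤ, a₀ = (if a % 3 = 1 then 1 else -1) →
        (3 : ℤ) ∣ (1 + 7 * b) ∧ (27 : ℤ) ∣ (7 * a - a₀ - 21 * a₀ * b) ∧
        (⟨0, -(a₀ : ℚ), 0, (1 + 7 * (b : ℚ)) / 3,
            (7 * (a : ℚ) - (a₀ : ℚ) - 21 * (a₀ : ℚ) * (b : ℚ)) / 27⟩ :
          WeierstrassCurve ℚ).Δ = -2 ^ 4 * 7 ^ 2 * (d : ℚ)) ∧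
    IsCoprime (-2 ^ 4 * 7 ^ 2 * d : ℤ) 3 := by
  have heqQ : (a : ℚ) ^ 2 + 28 * (b : ℚ) ^ 3 = 27 * (d : ℚ) := mod_cast heq
  have h27 : 27 ∣ a ^ 2 + b ^ 3 := ⟨d - b ^ 3, by linear_combination heq⟩
  have h3 : 3 ∣ a ^ 2 + b ^ 3 := .trans (by norm_num) h27
  refine ⟨fun ha ↦ ⟨?_, discriminant_short_model three_ne_zero heqQ⟩, fun ha a₀ ha₀ ↦ ?_, ?_⟩
  · exact three_dvd_of_three_dvd_sq_add_cube Int.prime_three (.trans (by norm_num) ha) h3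
  · obtain ⟨hsq, hsub⟩ := sq_eq_one_and_three_dvd_sub_of_eq_ite ha ha₀
    have hb := three_dvd_add_one_of_three_dvd_sq_add_cube Int.prime_three hsq hsub h3
    obtain ⟨k, hk⟩ := twentySeven_dvd_sub_of_twentySeven_dvd_sq_add_cube hsq hsub hb h27
    exact ⟨by omega, ⟨7 * k + a₀, by linear_combination 7 * hk⟩,
      discriminant_translated_model three_ne_zero (mod_cast hsq) heqQ⟩
  · have hcoeff : IsCoprime (-2 ^ 4 * 7 ^ 2 : ℤ) 3 := by norm_num
    exact hcoeff.mul_left hd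

/-- Integral models with good reduction at `3` of the quadratic twist by `−3` of
`y² = x³ + 21bx − 7a`, for a (⋆)-solution `(a,b,c)` of `a² + 28b³ = 27c⁷`. -/
theorem twist_good_reduction_28 (a b c : ℤ)
    (heq : a ^ 2 + 28 * b ^ 3 = 27 * c ^ 7)
    (hgcd : Int.gcd c (42 * a * b) = 1)
    (h3 : ¬ (3 : ℤ) ∣ a ∨ (27 : ℤ) ∣ a) :
    ((27 : ℤ) ∣ a → (3 : ℤ) ∣ b ∧
      (⟨0, 0, 0, 7 * (b : ℚ) / 3, 7 * (a : ℚ) / 27⟩ : WeierstrassCurve ℚ).Δ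
        = -2 ^ 4 * 7 ^ 2 * (c : ℚ) ^ 7) ∧
    (¬ (3 : ℤ) ∣ a →
      ∀ a₀ : ℤ, a₀ = (if a % 3 = 1 then 1 else -1) →
        (3 : ℤ) ∣ (1 + 7 * b) ∧ (27 : ℤ) ∣ (7 * a - a₀ - 21 * a₀ * b) ∧
        (⟨0, -(a₀ : ℚ), 0, (1 + 7 * (b : ℚ)) / 3,
            (7 * (a : ℚ) - (a₀ : ℚ) - 21 * (a₀ : ℚ) * (b : ℚ)) / 27⟩ :
          WeierstrassCurve ℚ).Δ = -2 ^ 4 * 7 ^ 2 * (c : ℚ) ^ 7) ∧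
    IsCoprime (-2 ^ 4 * 7 ^ 2 * c ^ 7 : ℤ) 3 := by
  have hc : IsCoprime c 3 :=
    (Int.isCoprime_iff_gcd_eq_one.mpr hgcd).of_isCoprime_of_dvd_right ⟨14 * a * b, by ring⟩
  exact_mod_cast twist_good_reduction_28_general a b (c ^ 7) heq hc.pow_left
end

section
/- Let a, b, c be integers with a² + 196b³ = 27c⁷, gcd(c, 42ab) = 1, and either 3 ∤ a or 27 ∣ a. (1) If 27 ∣ a, then 3 ∣ b, and the Weierstrass curve y² = x³ + (49b/3)·x + (49a/27) has integer coefficients and discriminant Δ = −2⁴·7⁴·c⁷. (2) If 3 ∤ a, let a₀ = 1 if a ≡ 1 (mod 3) and a₀ = −1 if a ≡ 2 (mod 3); then 3 divides 1 + 49b, 27 divides 49a − a₀ − 147a₀b, and the Weierstrass curve y² = x³ − a₀·x² + ((1 + 49b)/3)·x + ((49a − a₀ − 147a₀b)/27) has integer coefficients and discriminant Δ = −2⁴·7⁴·c⁷. In both cases the discriminant is coprime to 3. -/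
/-!
With `N = 49`, the first model is the short curve `E : y² = x³ + (N b / 3) x + N a / 27`, and the
second one arises from `E` by `x ↦ x - a₀ / 3`. Translation preserves the discriminant, and that of
`E` is `-16 N² (a² + 4 N b³) / 27`. Integrality of the constant coefficient of the translate is a
congruence modulo `27`, which follows from
`(N a)² - (a₀³ + 3 N a₀ b)² = N² (a² + 4 N b³) - (a₀² + N b)² (a₀² + 4 N b)`: each term on the right
is divisible by `27`, and on the left `N a + (a₀³ + 3 N a₀ b) ≡ 2 a` is a unit modulo `3`.
-/

section Discriminant

theorem Δ_short_translate {R : Type*} [CommRing R] (r A B : R) :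
    (⟨0, 3 * r, 0, A + 3 * r ^ 2, B + r * A + r ^ 3⟩ : WeierstrassCurve R).Δ =
      (⟨0, 0, 0, A, B⟩ : WeierstrassCurve R).Δ := by
  have translate_eq : (⟨0, 3 * r, 0, A + 3 * r ^ 2, B + r * A + r ^ 3⟩ : WeierstrassCurve R) =
      (⟨1, r, 0, 0⟩ : WeierstrassCurve.VariableChange R) • ⟨0, 0, 0, A, B⟩ := by
    ext <;> simp [WeierstrassCurve.variableChange_def]
  simp [translate_eq, WeierstrassCurve.variableChange_Δ]

theorem twentySeven_ne_zero {R : Type*} [Semiring R] [NoZeroDivisors R] (h3 : (3 : R) ≠ 0) :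
    (27 : R) ≠ 0 := by
  rw [show (27 : R) = 3 ^ 3 by norm_num]
  exact pow_ne_zero 3 h3

variable {K : Type*} [Field K] {N a b k : K}

theorem Δ_short_of_sq_add_four_mul_cube (h3 : (3 : K) ≠ 0)
    (heq : a ^ 2 + 4 * N * b ^ 3 = 27 * k) :
    (⟨0, 0, 0, N * b / 3, N * a / 27⟩ : WeierstrassCurve K).Δ = -2 ^ 4 * N ^ 2 * k := by
  have h27 : (27 : K) ≠ 0 := twentySeven_ne_zero h3
  have isShortNF : (⟨0, 0, 0, N * b / 3, N * a / 27⟩ : WeierstrassCurve K).IsShortNF :=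
    ⟨rfl, rfl, rfl⟩
  rw [WeierstrassCurve.Δ_of_isShortNF]
  field_simp
  linear_combination (-16 * 27 * N ^ 2) * heq

theorem Δ_translate_of_sq_add_four_mul_cube (h3 : (3 : K) ≠ 0)
    (heq : a ^ 2 + 4 * N * b ^ 3 = 27 * k) (r : K) :
    (⟨0, -r, 0, (r ^ 2 + N * b) / 3, (N * a - r ^ 3 - 3 * N * r * b) / 27⟩ :
      WeierstrassCurve K).Δ = -2 ^ 4 * N ^ 2 * k := by
  have h27 : (27 : K) ≠ 0 := twentySeven_ne_zero h3
  rw [← Δ_short_of_sq_add_four_mul_cube h3 heq, ← Δ_short_translate (-r / 3)]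
  congr 2 <;> field_simp <;> ring

end Discriminant

section Congruences

theorem cube_modEq_self_three (x : ℤ) : x ^ 3 ≡ x [ZMOD 3] := by
  refine (ZMod.intCast_eq_intCast_iff _ _ 3).mp ?_
  rw [Int.cast_pow, ZMod.pow_card]

variable {N a b r : ℤ}

theorem three_dvd_sq_add_mul (hr : r ≡ a [ZMOD 3]) (h : 3 ∣ a ^ 2 + 4 * N * b ^ 3) :
    3 ∣ r ^ 2 + N * b := by
  refine Int.modEq_zero_iff_dvd.mp ?_
  calc r ^ 2 + N * b
    _ ≡ a ^ 2 + N * b ^ 3 [ZMOD 3] := (hr.pow 2).add ((cube_modEq_self_three b).symm.mul_left N)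
    _ ≡ a ^ 2 + 4 * N * b ^ 3 [ZMOD 3] := Int.modEq_iff_dvd.mpr ⟨N * b ^ 3, by ring⟩
    _ ≡ 0 [ZMOD 3] := Int.modEq_zero_iff_dvd.mpr h

theorem three_dvd_of_sq_add_four_mul_cube (hN : ¬ 3 ∣ N) (ha : 3 ∣ a)
    (h : 3 ∣ a ^ 2 + 4 * N * b ^ 3) : 3 ∣ b := by
  have three_dvd : 3 ∣ 0 ^ 2 + N * b :=
    three_dvd_sq_add_mul (Int.modEq_zero_iff_dvd.mpr ha).symm h
  rw [zero_pow two_ne_zero, zero_add] at three_dvd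
  exact (Int.prime_three.dvd_or_dvd three_dvd).resolve_left hN

theorem twentySeven_dvd_mul_sub_cube_sub_mul (hN : N ≡ 1 [ZMOD 3]) (hr : r ≡ a [ZMOD 3])
    (ha : ¬ 3 ∣ a) (h : 27 ∣ a ^ 2 + 4 * N * b ^ 3) :
    27 ∣ N * a - r ^ 3 - 3 * N * r * b := by
  have three_dvd : 3 ∣ r ^ 2 + N * b := three_dvd_sq_add_mul hr (dvd_trans (by norm_num) h)
  have three_dvd' : 3 ∣ r ^ 2 + 4 * N * b := by
    rw [show r ^ 2 + 4 * N * b = r ^ 2 + N * b + 3 * (N * b) by ring]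
    exact three_dvd.add (dvd_mul_right 3 _)
  have dvd_mul_conj :
      27 ∣ (N * a - r ^ 3 - 3 * N * r * b) * (N * a + r ^ 3 + 3 * N * r * b) := by
    rw [show (N * a - r ^ 3 - 3 * N * r * b) * (N * a + r ^ 3 + 3 * N * r * b) =
      N ^ 2 * (a ^ 2 + 4 * N * b ^ 3) - (r ^ 2 + N * b) ^ 2 * (r ^ 2 + 4 * N * b) by ring]
    exact (h.mul_left _).sub (mul_dvd_mul (pow_dvd_pow_of_dvd three_dvd 2) three_dvd')
  have conj_modEq : N * a + r ^ 3 + 3 * N * r * b ≡ 2 * a [ZMOD 3] :=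
    calc N * a + r ^ 3 + 3 * N * r * b
      _ ≡ N * a + r ^ 3 [ZMOD 3] := Int.modEq_iff_dvd.mpr ⟨-(N * r * b), by ring⟩
      _ ≡ 1 * a + a [ZMOD 3] := (hN.mul_right a).add ((cube_modEq_self_three r).trans hr)
      _ = 2 * a := by ring
  have isCoprime_conj : IsCoprime 27 (N * a + r ^ 3 + 3 * N * r * b) := by
    have not_dvd : ¬ 3 ∣ N * a + r ^ 3 + 3 * N * r * b := by
      rw [conj_modEq.dvd_iff]
      omega
    exact (Int.prime_three.coprime_iff_not_dvd.mpr not_dvd).pow_left (m := 3)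
  exact isCoprime_conj.dvd_of_dvd_mul_right dvd_mul_conj

theorem modEq_three_and_sq_eq_one_of_eq_ite (ha : ¬ 3 ∣ a)
    (hr : r = if a % 3 = 1 then 1 else -1) : r ≡ a [ZMOD 3] ∧ r ^ 2 = 1 := by
  rw [Int.ModEq, hr]
  split_ifs <;> omega

end Congruences

theorem twist_good_reduction_196_general {N a b k : ℤ} (hN : N ≡ 1 [ZMOD 3])
    (heq : a ^ 2 + 4 * N * b ^ 3 = 27 * k) (hk : IsCoprime k 3) :
    ((27 : ℤ) ∣ a → (3 : ℤ) ∣ b ∧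
      (⟨0, 0, 0, N * (b : ℚ) / 3, N * (a : ℚ) / 27⟩ : WeierstrassCurve ℚ).Δ
        = -2 ^ 4 * N ^ 2 * (k : ℚ)) ∧
    (¬ (3 : ℤ) ∣ a →
      ∀ a₀ : ℤ, a₀ = (if a % 3 = 1 then 1 else -1) →
        (3 : ℤ) ∣ (1 + N * b) ∧ (27 : ℤ) ∣ (N * a - a₀ - 3 * N * a₀ * b) ∧
        (⟨0, -(a₀ : ℚ), 0, (1 + N * (b : ℚ)) / 3,
            (N * (a : ℚ) - (a₀ : ℚ) - 3 * N * (a₀ : ℚ) * (b : ℚ)) / 27⟩ :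
          WeierstrassCurve ℚ).Δ = -2 ^ 4 * N ^ 2 * (k : ℚ)) ∧
    IsCoprime (-2 ^ 4 * N ^ 2 * k : ℤ) 3 := by
  have heqℚ : (a : ℚ) ^ 2 + 4 * N * (b : ℚ) ^ 3 = 27 * k := mod_cast heq
  have h27 : 27 ∣ a ^ 2 + 4 * N * b ^ 3 := ⟨k, heq⟩
  have h3 : 3 ∣ a ^ 2 + 4 * N * b ^ 3 := dvd_trans (by norm_num) h27
  have hN3 : ¬ 3 ∣ N := by
    rw [hN.dvd_iff]
    norm_num
  refine ⟨fun ha => ⟨?_, ?_⟩, fun ha a₀ ha₀ => ?_, ?_⟩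
  · exact three_dvd_of_sq_add_four_mul_cube hN3 (dvd_trans (by norm_num) ha) h3
  · exact Δ_short_of_sq_add_four_mul_cube three_ne_zero heqℚ
  · obtain ⟨ha₀_modEq, ha₀_sq⟩ := modEq_three_and_sq_eq_one_of_eq_ite ha ha₀
    have ha₀_cube : a₀ ^ 3 = a₀ := by rw [pow_succ, ha₀_sq, one_mul]
    have three_dvd := three_dvd_sq_add_mul ha₀_modEq h3
    have twentySeven_dvd := twentySeven_dvd_mul_sub_cube_sub_mul hN ha₀_modEq ha h27
    have Δ_eq := Δ_translate_of_sq_add_four_mul_cube three_ne_zero heqℚ (a₀ : ℚ)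
    rw [← Int.cast_pow, ← Int.cast_pow, ha₀_sq, ha₀_cube, Int.cast_one] at Δ_eq
    rw [ha₀_sq] at three_dvd
    rw [ha₀_cube] at twentySeven_dvd
    exact ⟨three_dvd, twentySeven_dvd, Δ_eq⟩
  · have isCoprime_N : IsCoprime N 3 := (Int.prime_three.coprime_iff_not_dvd.mpr hN3).symm
    have isCoprime_two : IsCoprime (-2 ^ 4 : ℤ) 3 := by norm_num
    exact (isCoprime_two.mul_left isCoprime_N.pow_left).mul_left hk

/-- Integral models with good reduction at `3` of the quadratic twist by `−3` of
`y² = x³ + 147bx − 49a`, for a (⋆)-solution `(a,b,c)` of `a² + 196b³ = 27c⁷`. -/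
theorem twist_good_reduction_196 (a b c : ℤ)
    (heq : a ^ 2 + 196 * b ^ 3 = 27 * c ^ 7)
    (hgcd : Int.gcd c (42 * a * b) = 1)
    (h3 : ¬ (3 : ℤ) ∣ a ∨ (27 : ℤ) ∣ a) :
    ((27 : ℤ) ∣ a → (3 : ℤ) ∣ b ∧
      (⟨0, 0, 0, 49 * (b : ℚ) / 3, 49 * (a : ℚ) / 27⟩ : WeierstrassCurve ℚ).Δ
        = -2 ^ 4 * 7 ^ 4 * (c : ℚ) ^ 7) ∧
    (¬ (3 : ℤ) ∣ a →
      ∀ a₀ : ℤ, a₀ = (if a % 3 = 1 then 1 else -1) →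
        (3 : ℤ) ∣ (1 + 49 * b) ∧ (27 : ℤ) ∣ (49 * a - a₀ - 147 * a₀ * b) ∧
        (⟨0, -(a₀ : ℚ), 0, (1 + 49 * (b : ℚ)) / 3,
            (49 * (a : ℚ) - (a₀ : ℚ) - 147 * (a₀ : ℚ) * (b : ℚ)) / 27⟩ :
          WeierstrassCurve ℚ).Δ = -2 ^ 4 * 7 ^ 4 * (c : ℚ) ^ 7) ∧
    IsCoprime (-2 ^ 4 * 7 ^ 4 * c ^ 7 : ℤ) 3 := by
  have hc : IsCoprime c 3 := (Int.isCoprime_iff_gcd_eq_one.mpr hgcd).of_isCoprime_of_dvd_right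
    ⟨14 * a * b, by ring⟩
  have heq' : a ^ 2 + 4 * 49 * b ^ 3 = 27 * c ^ 7 := by linarith
  convert twist_good_reduction_196_general (by decide) heq' hc.pow_left using 0
  norm_num
end

section
/- Let x and y be coprime integers. Then: (1) 49 does not divide x³ − 7x²y + 7xy² + 7y³; (2) 16 does not divide x³ − 7x²y + 7xy² + 7y³; (3) 49 does not divide x³ − 4x²y + 3xy² + y³. -/
/-!
At `7`, both forms are Eisenstein: `x³ − 7x²y + 7xy² + 7y³` visibly so, and
`x³ − 4x²y + 3xy² + y³` after the substitution `x = z − y`. If the square of a prime `p` divides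
the value of a `p`-Eisenstein form, then `p` divides the leading variable, and then the other one.

At `2`, the first form is congruent to `(x − y)³`, so an even value forces `x = 2w + y`. The value
is then `8 (w³ − 2w²y − wy² + y³)`, and the second factor has no nontrivial zero over `𝔽₂`.
-/

section Eisenstein

variable {R : Type*} [CommRing R] [IsDomain R] {p a d x y t : R} {n : ℕ}

-- The mixed terms of the form, all divisible by `p * x`, are collected in `p * (x * t)`.
lemma not_sq_dvd_of_eisenstein (hp : Prime p) (ha : ¬ p ∣ a) (hd : ¬ p ∣ d) (hn : 2 ≤ n)
    (hxy : IsRelPrime x y) : ¬ p ^ 2 ∣ a * x ^ n + p * (x * t + d * y ^ n) := by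
  intro h
  have hx : p ∣ x := by
    have hlead : p ∣ a * x ^ n :=
      (dvd_add_left (dvd_mul_right p _)).1 ((dvd_pow_self p two_ne_zero).trans h)
    exact hp.dvd_of_dvd_pow ((hp.dvd_or_dvd hlead).resolve_left ha)
  have hy : p ∣ y := by
    have hlead : p ^ 2 ∣ a * x ^ n :=
      ((pow_dvd_pow_of_dvd hx 2).trans (pow_dvd_pow x hn)).mul_left a
    have htail : p ∣ x * t + d * y ^ n := by
      rw [← mul_dvd_mul_iff_left hp.ne_zero, ← sq]
      exact (dvd_add_right hlead).1 h
    have hlast : p ∣ d * y ^ n := (dvd_add_right (hx.mul_right t)).1 htail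
    exact hp.dvd_of_dvd_pow ((hp.dvd_or_dvd hlast).resolve_left hd)
  exact hp.not_isUnit (hxy hx hy)

end Eisenstein

section CubicForms

variable {R : Type*} [CommRing R]

/-- The binary cubic form `f` in the denominator of the `j`-map of `X_{ns}⁺(7)`, as a function on
pairs of elements of a commutative ring. -/
def nsCubic (x y : R) : R := x ^ 3 - 7 * x ^ 2 * y + 7 * x * y ^ 2 + 7 * y ^ 3

/-- The binary cubic form `f_sp` in the denominator of the `j`-map of `X_{sp}⁺(7)`, as a function on
pairs of elements of a commutative ring. -/
def spCubic (x y : R) : R := x ^ 3 - 4 * x ^ 2 * y + 3 * x * y ^ 2 + y ^ 3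

lemma nsCubic_eq_eisenstein (x y : R) :
    nsCubic x y = 1 * x ^ 3 + 7 * (x * (y ^ 2 - x * y) + 1 * y ^ 3) := by
  rw [nsCubic]; ring

lemma spCubic_eq_eisenstein (x y : R) :
    spCubic x y = 1 * (x + y) ^ 3 + 7 * ((x + y) * (2 * y ^ 2 - (x + y) * y) + -1 * y ^ 3) := by
  rw [spCubic]; ring

lemma nsCubic_eq_sub_pow_three_add (x y : R) :
    nsCubic x y = (x - y) ^ 3 + 2 * (-2 * x ^ 2 * y + 2 * x * y ^ 2 + 4 * y ^ 3) := by
  rw [nsCubic]; ring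

lemma nsCubic_two_mul_add_self (w y : R) :
    nsCubic (2 * w + y) y = 8 * (w ^ 3 - 2 * w ^ 2 * y - w * y ^ 2 + y ^ 3) := by
  rw [nsCubic]; ring

variable [IsDomain R] {x y : R}

lemma not_forty_nine_dvd_nsCubic (h7 : Prime (7 : R)) (hxy : IsRelPrime x y) :
    ¬ 49 ∣ nsCubic x y := by
  rw [show (49 : R) = 7 ^ 2 by norm_num, nsCubic_eq_eisenstein]
  exact not_sq_dvd_of_eisenstein h7 h7.not_dvd_one h7.not_dvd_one (by norm_num) hxy

lemma not_forty_nine_dvd_spCubic (h7 : Prime (7 : R)) (hxy : IsRelPrime x y) :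
    ¬ 49 ∣ spCubic x y := by
  have hshift : IsRelPrime (x + y) y := by simpa only [mul_one] using hxy.add_mul_left_left 1
  rw [show (49 : R) = 7 ^ 2 by norm_num, spCubic_eq_eisenstein]
  exact not_sq_dvd_of_eisenstein h7 h7.not_dvd_one (dvd_neg.not.2 h7.not_dvd_one) (by norm_num)
    hshift

end CubicForms

lemma even_and_even_of_even_cubic {w y : ℤ}
    (h : Even (w ^ 3 - 2 * w ^ 2 * y - w * y ^ 2 + y ^ 3)) : Even w ∧ Even y := by
  simp only [Int.even_add, Int.even_sub, Int.even_mul, Int.even_pow, even_two] at h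
  tauto

lemma not_sixteen_dvd_nsCubic {x y : ℤ} (hxy : IsRelPrime x y) : ¬ 16 ∣ nsCubic x y := by
  intro h
  obtain ⟨w, hw⟩ : 2 ∣ x - y := by
    have heven : 2 ∣ nsCubic x y := dvd_trans (by norm_num) h
    rw [nsCubic_eq_sub_pow_three_add] at heven
    exact Int.prime_two.dvd_of_dvd_pow ((dvd_add_left (dvd_mul_right 2 _)).1 heven)
  obtain rfl : x = 2 * w + y := by rw [← hw, sub_add_cancel]
  have hy : 2 ∣ y := by
    rw [nsCubic_two_mul_add_self, show (16 : ℤ) = 8 * 2 by norm_num,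
      mul_dvd_mul_iff_left (by norm_num), ← even_iff_two_dvd] at h
    exact (even_and_even_of_even_cubic h).2.two_dvd
  exact Int.prime_two.not_isUnit (hxy (dvd_add (dvd_mul_right 2 w) hy) hy)

/-- Non-divisibility of the cubic forms `x³ − 7x²y + 7xy² + 7y³` (by `49` and `16`)
and `x³ − 4x²y + 3xy² + y³` (by `49`) at coprime arguments. -/
theorem cubic_forms_nondivisibility (x y : ℤ) (hxy : Int.gcd x y = 1) :
    ¬ (49 : ℤ) ∣ (x ^ 3 - 7 * x ^ 2 * y + 7 * x * y ^ 2 + 7 * y ^ 3) ∧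
    ¬ (16 : ℤ) ∣ (x ^ 3 - 7 * x ^ 2 * y + 7 * x * y ^ 2 + 7 * y ^ 3) ∧
    ¬ (49 : ℤ) ∣ (x ^ 3 - 4 * x ^ 2 * y + 3 * x * y ^ 2 + y ^ 3) := by
  have hrel : IsRelPrime x y := (Int.isCoprime_iff_gcd_eq_one.2 hxy).isRelPrime
  have h7 : Prime (7 : ℤ) := by norm_num
  exact ⟨not_forty_nine_dvd_nsCubic h7 hrel, not_sixteen_dvd_nsCubic hrel,
    not_forty_nine_dvd_spCubic h7 hrel⟩
end

section
/- Let x and y be coprime integers. Then the greatest common divisor of x³ − 7x²y + 7xy² + 7y³ and 4x(x² + 7y²)(x² − 7xy + 14y²)(5x² − 14xy − 7y²) divides 56. -/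
/-!
Write `f` and `g` for the two forms. Where `f` vanishes, each factor of `g` divides a constant
times a power of `y`, the constant being a product of powers of `2` and `7`; multiplying, `g`
divides `2 ^ 12 * 7 ^ 4 * y ^ 14`. Modulo a common divisor `d` of `f` and `g`, the relation `f = 0`
exhibits `x ^ 3` as a multiple of `y`, so `y` is a unit by coprimality and `d ∣ 2 ^ 12 * 7 ^ 4`.
The exponents are then cut down by `f` alone. Since `f ≡ x ^ 3` modulo `7`, and `f ≡ 7 * y ^ 3`
modulo `49` when `7 ∣ x`, one has `49 ∤ f`. Since `f ≡ (x + y) ^ 2 * (x - y)` modulo `8`, `f` is odd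
unless `x` and `y` are both odd, and in that case `f ≡ 8` modulo `16`.
-/

lemma dvd_prime_pow_mul_of_not_pow_succ_dvd {M : Type*} [CommMonoidWithZero M]
    [IsCancelMulZero M] [DecompositionMonoid M] {p d c : M} {k m : ℕ} (hp : Prime p)
    (hd : d ∣ p ^ k * c) (hpd : ¬ p ^ (m + 1) ∣ d) : d ∣ p ^ m * c := by
  obtain ⟨u, v, hu, hv, rfl⟩ := exists_dvd_and_dvd_of_dvd_mul hd
  obtain ⟨i, -, hui⟩ := (dvd_prime_pow hp k).mp hu
  have hi : i ≤ m := by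
    by_contra! hmi
    exact hpd (((pow_dvd_pow p hmi).trans hui.symm.dvd).mul_right v)
  exact mul_dvd_mul (hui.dvd.trans (pow_dvd_pow p hi)) hv

section Forms

variable {R S : Type*} [CommRing R] [CommRing S]

/-- The binary cubic form `f` in the denominator of the `j`-map of `X_{ns}⁺(7)`: at `t = x / y` one
has `j = g ^ 3 / f ^ 7`, where `g` is `jnsNum`. -/
def jnsDenom (x y : R) : R :=
  x ^ 3 - 7 * x ^ 2 * y + 7 * x * y ^ 2 + 7 * y ^ 3

/-- The binary form `g` of degree seven whose cube is the numerator of the `j`-map of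
`X_{ns}⁺(7)`. -/
def jnsNum (x y : R) : R :=
  4 * x * (x ^ 2 + 7 * y ^ 2) * (x ^ 2 - 7 * x * y + 14 * y ^ 2) *
    (5 * x ^ 2 - 14 * x * y - 7 * y ^ 2)

lemma map_jnsDenom (φ : R →+* S) (x y : R) : φ (jnsDenom x y) = jnsDenom (φ x) (φ y) := by
  simp [jnsDenom, map_ofNat]

lemma map_jnsNum (φ : R →+* S) (x y : R) : φ (jnsNum x y) = jnsNum (φ x) (φ y) := by
  simp [jnsNum, map_ofNat]

lemma jnsNum_dvd_of_jnsDenom_eq_zero {x y : R} (hf : jnsDenom x y = 0) :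
    jnsNum x y ∣ 2 ^ 12 * 7 ^ 4 * y ^ 14 := by
  unfold jnsDenom at hf
  -- The cofactors come from the extended Euclidean algorithm for `f` and the factor at `y = 1`.
  have h₁ : x ∣ 7 * y ^ 3 :=
    ⟨-x ^ 2 + 7 * x * y - 7 * y ^ 2, by linear_combination hf⟩
  have h₂ : x ^ 2 + 7 * y ^ 2 ∣ 56 * y ^ 3 :=
    ⟨7 * y - x, by linear_combination hf⟩
  have h₃ : x ^ 2 - 7 * x * y + 14 * y ^ 2 ∣ 56 * y ^ 4 :=
    ⟨-x ^ 2 + 6 * x * y + 7 * y ^ 2, by linear_combination (x - 6 * y) * hf⟩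
  have h₄ : 5 * x ^ 2 - 14 * x * y - 7 * y ^ 2 ∣ 112 * y ^ 4 :=
    ⟨3 * x ^ 2 - 20 * x * y + 21 * y ^ 2, by linear_combination (37 * y - 15 * x) * hf⟩
  calc jnsNum x y
      ∣ 4 * (7 * y ^ 3) * (56 * y ^ 3) * (56 * y ^ 4) * (112 * y ^ 4) :=
        mul_dvd_mul (mul_dvd_mul (mul_dvd_mul (mul_dvd_mul_left 4 h₁) h₂) h₃) h₄
    _ = 2 ^ 12 * 7 ^ 4 * y ^ 14 := by ring

lemma isUnit_of_jnsDenom_eq_zero {x y : R} (hxy : IsCoprime x y) (hf : jnsDenom x y = 0) :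
    IsUnit y := by
  unfold jnsDenom at hf
  have y_dvd : y ∣ x ^ 3 :=
    ⟨7 * x ^ 2 - 7 * x * y - 7 * y ^ 2, by linear_combination hf⟩
  exact hxy.pow_left.isUnit_of_dvd' y_dvd dvd_rfl

lemma dvd_of_dvd_jnsDenom_of_dvd_jnsNum {d x y : R} (hxy : IsCoprime x y)
    (hf : d ∣ jnsDenom x y) (hg : d ∣ jnsNum x y) : d ∣ 2 ^ 12 * 7 ^ 4 := by
  let π := Ideal.Quotient.mk (Ideal.span {d})
  have π_eq_zero_iff (a : R) : π a = 0 ↔ d ∣ a := Ideal.Quotient.eq_zero_iff_dvd d a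
  rw [← π_eq_zero_iff, map_jnsDenom] at hf
  rw [← π_eq_zero_iff, map_jnsNum] at hg
  have y_unit : IsUnit (π y) := isUnit_of_jnsDenom_eq_zero (hxy.map π) hf
  have h : 2 ^ 12 * 7 ^ 4 * π y ^ 14 = 0 :=
    zero_dvd_iff.mp (hg ▸ jnsNum_dvd_of_jnsDenom_eq_zero hf)
  rw [← π_eq_zero_iff]
  simpa [map_ofNat] using (y_unit.pow 14).mul_left_eq_zero.mp h

end Forms

lemma int_prime_seven : Prime (7 : ℤ) := Int.prime_ofNat_iff.mpr (by norm_num)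

lemma not_49_dvd_jnsDenom {x y : ℤ} (hxy : IsCoprime x y) : ¬ 49 ∣ jnsDenom x y := by
  intro h
  have hx : 7 ∣ x := by
    have decomp : jnsDenom x y = x ^ 3 + 7 * (-x ^ 2 * y + x * y ^ 2 + y ^ 3) := by
      unfold jnsDenom
      ring
    exact int_prime_seven.dvd_of_dvd_pow (n := 3) (by lia)
  have hy : 7 ∣ y := by
    obtain ⟨k, rfl⟩ := hx
    have decomp : jnsDenom (7 * k) y =
        7 * y ^ 3 + 49 * (7 * k ^ 3 - 7 * k ^ 2 * y + k * y ^ 2) := by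
      unfold jnsDenom
      ring
    exact int_prime_seven.dvd_of_dvd_pow (n := 3) (by lia)
  exact int_prime_seven.not_isUnit (hxy.isUnit_of_dvd' hx hy)

lemma jnsDenom_modEq_eight_of_odd {x y : ℤ} (hx : Odd x) (hy : Odd y) :
    jnsDenom x y ≡ 8 [ZMOD 16] := by
  have odd_factor : Odd (y * (y ^ 2 + x * y - x ^ 2)) :=
    hy.mul ((hy.pow.add_odd (hx.mul hy)).sub_odd hx.pow)
  obtain ⟨c, hc⟩ := odd_factor
  obtain ⟨a, rfl⟩ := hx
  obtain ⟨b, rfl⟩ := hy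
  -- `(x + y) / 2` and `(x - y) / 2` have opposite parity, as their difference is `y`.
  have even_prod : Even ((a + b + 1) ^ 2 * (a - b)) := by grind
  obtain ⟨e, he⟩ := even_prod
  refine (Int.modEq_iff_dvd.mpr ⟨e + c, ?_⟩).symm
  unfold jnsDenom
  linear_combination 8 * he + 8 * hc

lemma odd_jnsDenom_of_odd_add {x y : ℤ} (h : Odd (x + y)) : Odd (jnsDenom x y) := by
  have decomp : jnsDenom x y =
      (x + y) ^ 2 * ((x + y) - 2 * y) + 2 * (4 * y * (y ^ 2 + x * y - x ^ 2)) := by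
    unfold jnsDenom
    ring
  rw [decomp]
  exact (h.pow.mul (h.sub_even (even_two_mul y))).add_even (even_two_mul _)

lemma not_16_dvd_jnsDenom {x y : ℤ} (hxy : IsCoprime x y) : ¬ 16 ∣ jnsDenom x y := by
  intro h
  rcases Int.even_or_odd (x + y) with even_add | odd_add
  · have hx : Odd x := by
      by_contra! hx
      have x_even : Even x := Int.not_odd_iff_even.mp hx
      have y_even : Even y := (Int.even_add.mp even_add).mp x_even
      exact Int.prime_two.not_isUnit (hxy.isUnit_of_dvd' x_even.two_dvd y_even.two_dvd)
    have hy : Odd y := (Int.even_add'.mp even_add).mp hx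
    have zero_modEq_eight : 0 ≡ 8 [ZMOD 16] :=
      h.modEq_zero_int.symm.trans (jnsDenom_modEq_eight_of_odd hx hy)
    exact absurd zero_modEq_eight (by decide)
  · have f_even : Even (jnsDenom x y) := even_iff_two_dvd.mpr (dvd_trans (by norm_num) h)
    exact Int.not_even_iff_odd.mpr (odd_jnsDenom_of_odd_add odd_add) f_even

/-- For coprime integers `x, y`, the gcd of the denominator and numerator forms of the
`j`-map of `X_{ns}⁺(7)` divides `56`. -/
theorem gcd_jns_forms (x y : ℤ) (hxy : Int.gcd x y = 1) :
    (Int.gcd (x ^ 3 - 7 * x ^ 2 * y + 7 * x * y ^ 2 + 7 * y ^ 3)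
      (4 * x * (x ^ 2 + 7 * y ^ 2) * (x ^ 2 - 7 * x * y + 14 * y ^ 2) *
        (5 * x ^ 2 - 14 * x * y - 7 * y ^ 2)) : ℤ) ∣ 56 := by
  change (Int.gcd (jnsDenom x y) (jnsNum x y) : ℤ) ∣ 2 ^ 3 * 7 ^ 1
  have coprime : IsCoprime x y := Int.isCoprime_iff_gcd_eq_one.mpr hxy
  have dvd_f := Int.gcd_dvd_left (jnsDenom x y) (jnsNum x y)
  have dvd_g := Int.gcd_dvd_right (jnsDenom x y) (jnsNum x y)
  have dvd_const := dvd_of_dvd_jnsDenom_of_dvd_jnsNum coprime dvd_f dvd_g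
  have two_part := dvd_prime_pow_mul_of_not_pow_succ_dvd (m := 3) Int.prime_two dvd_const
    fun h ↦ not_16_dvd_jnsDenom coprime (h.trans dvd_f)
  rw [mul_comm] at two_part ⊢
  exact dvd_prime_pow_mul_of_not_pow_succ_dvd int_prime_seven two_part
    fun h ↦ not_49_dvd_jnsDenom coprime (h.trans dvd_f)
end
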